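/- arXiv:2603.08941 — 4 statements merged into one kernel-verified Lean document; each statement's English description precedes it below -/
import Mathlib

section
/- Let F be a finite field, let C ⊆ F^n be a linear code of dimension k with generator matrix G ∈ F^{n×k}, let k' < k, and let Enc be the k'-randomized encoding map for G. Set C_X = C and let C_Z ⊆ F^n be the orthogonal complement of the span of the last k−k' columns of G, and let d_X be the minimum Hamming weight of a vector in C_X \ C_Z^⊥. Then for every e ∈ ℕ: d_X > 2e if and only if Enc is decodable from e errors. -/
/-- Concatenation `(m, r) ∈ F^k` of a message `m ∈ F^{k'}` (first `k'` coordinates)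
with randomness `r ∈ F^{k-k'}` (last `k - k'` coordinates). -/
def concat {F : Type*} {k k' : ℕ} (m : Fin k' → F) (r : Fin (k - k') → F) : Fin k → F :=
  fun j => if hj : (j : ℕ) < k' then m ⟨j, hj⟩
           else r ⟨(j : ℕ) - k', by have := j.isLt; omega⟩

/-- The orthogonal complement `W^⊥` of a subspace `W ⊆ F^n` with respect to the
bilinear form `⟨u,v⟩ = ∑ i, u i * v i`. -/
def dualCode {F : Type*} [Field F] {n : ℕ} (W : Submodule F (Fin n → F)) :
    Submodule F (Fin n → F) where
  carrier := {u | ∀ w ∈ W, ∑ i, u i * w i = 0}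
  add_mem' := by
    intro a b ha hb w hw
    simp only [Set.mem_setOf_eq] at *
    simp [Pi.add_apply, add_mul, Finset.sum_add_distrib, ha w hw, hb w hw]
  zero_mem' := by intro w hw; simp
  smul_mem' := by
    intro c a ha w hw
    simp only [Set.mem_setOf_eq] at *
    simp [Pi.smul_apply, smul_eq_mul, mul_assoc, ← Finset.mul_sum, ha w hw]

/-- The span of the last `k - k'` columns of `G` (the columns with index `≥ k'`). -/
def lastColSpan {F : Type*} [Field F] {n k : ℕ} (G : Matrix (Fin n) (Fin k) F) (k' : ℕ) :
    Submodule F (Fin n → F) :=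
  Submodule.span F {v | ∃ j : Fin k, k' ≤ (j : ℕ) ∧ v = fun i => G i j}

/-- The `k'`-randomized encoding map for `G` is decodable from `e` errors: there is a
deterministic decoder `D` recovering `m` from `G·(m,r) + y` whenever `wt(y) ≤ e`. -/
def DecodableFromErrors {F : Type*} [Field F] [DecidableEq F] {n k : ℕ}
    (G : Matrix (Fin n) (Fin k) F) (k' e : ℕ) : Prop :=
  ∃ D : (Fin n → F) → (Fin k' → F),
    ∀ (m : Fin k' → F) (r : Fin (k - k') → F) (y : Fin n → F),
      hammingNorm y ≤ e → D (G.mulVec (concat m r) + y) = m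

/-- The `k'`-randomized encoding map for `G` is `t`-zero-knowledge: for every set `I` of `t`
coordinates and every pair of messages `m, m'`, the restrictions `Enc(m)|_I` and `Enc(m')|_I`
are identically distributed (over uniformly random `r`), i.e. each value `v ∈ F^I` is hit by
the same number of choices of randomness `r`. -/
def IsZK {F : Type*} [Field F] {n k : ℕ} (G : Matrix (Fin n) (Fin k) F) (k' t : ℕ) : Prop :=
  ∀ I : Finset (Fin n), I.card = t →
    ∀ m m' : Fin k' → F, ∀ v : {i // i ∈ I} → F,
      Nat.card {r : Fin (k - k') → F //
          ∀ i : {i // i ∈ I}, G.mulVec (concat m r) i.1 = v i} =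
      Nat.card {r : Fin (k - k') → F //
          ∀ i : {i // i ∈ I}, G.mulVec (concat m' r) i.1 = v i}

/-!
Unique decoding within radius `e` is possible exactly when encodings of distinct messages are more
than `2e` apart: two codewords at distance at most `2e` have a common point within distance `e` of
both. By linearity this says that `2e < wt(G·(m, r))` whenever `m ≠ 0`. Since `G` is injective and
the bilinear form is nondegenerate, the vectors `G·(m, r)` with `m ≠ 0` are exactly those of
`C_X \ C_Z^⊥`.
-/

section Hamming

variable {ι : Type*} [Fintype ι] {β : ι → Type*} [∀ i, DecidableEq (β i)]

theorem exists_hammingDist_le_and_hammingDist_le {x y : ∀ i, β i} {a b : ℕ}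
    (h : hammingDist x y ≤ a + b) : ∃ z, hammingDist x z ≤ a ∧ hammingDist z y ≤ b := by
  classical
  let T : Finset ι := {i | x i ≠ y i}
  have hT : T.card ≤ a + b := h
  obtain ⟨S, hST, hS⟩ := Finset.exists_subset_card_eq (min_le_right a T.card)
  refine ⟨S.piecewise y x, ?_, ?_⟩
  · calc hammingDist x (S.piecewise y x) ≤ S.card := Finset.card_le_card fun i hi => by
          by_contra hiS
          simp [hiS] at hi
      _ ≤ a := hS.trans_le (min_le_left _ _)
  · calc hammingDist (S.piecewise y x) y ≤ (T \ S).card := Finset.card_le_card fun i hi => by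
          by_cases hiS : i ∈ S
          · simp [hiS] at hi
          · simpa [T, hiS] using hi
      _ ≤ b := by rw [Finset.card_sdiff_of_subset hST]; omega

theorem exists_decoder_iff_forall_lt_hammingDist {M R : Type*} [Nonempty M]
    (enc : M → R → ∀ i, β i) (e : ℕ) :
    (∃ D : (∀ i, β i) → M, ∀ m r z, hammingDist (enc m r) z ≤ e → D z = m) ↔
      ∀ m r m' r', m ≠ m' → 2 * e < hammingDist (enc m r) (enc m' r') := by
  constructor
  · rintro ⟨D, hD⟩ m r m' r' hne
    by_contra! hle
    obtain ⟨z, hz, hz'⟩ := exists_hammingDist_le_and_hammingDist_le (hle.trans_eq (two_mul e))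
    rw [hammingDist_comm] at hz'
    exact hne ((hD m r z hz).symm.trans (hD m' r' z hz'))
  · intro hsep
    have hunique : ∀ z, ∃ m, ∀ m' r', hammingDist (enc m' r') z ≤ e → m = m' := by
      intro z
      by_cases hz : ∃ m r, hammingDist (enc m r) z ≤ e
      · obtain ⟨m, r, hm⟩ := hz
        refine ⟨m, fun m' r' hm' => ?_⟩
        by_contra hne
        have hlt := hsep m r m' r' hne
        have htri := hammingDist_triangle_right (enc m r) (enc m' r') z
        omega
      · exact ⟨Classical.arbitrary M, fun m r hm => absurd ⟨m, r, hm⟩ hz⟩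
    choose D hD using hunique
    exact ⟨D, fun m r z => hD z m r⟩

end Hamming

section Concat

variable {F : Type*} {k k' : ℕ}

theorem concat_sub_concat [Sub F] (m m' : Fin k' → F) (r r' : Fin (k - k') → F) :
    (concat m r - concat m' r' : Fin k → F) = concat (m - m') (r - r') := by
  funext j
  simp only [concat, Pi.sub_apply]
  split_ifs <;> rfl

theorem concat_zero_zero [Zero F] :
    (concat (0 : Fin k' → F) (0 : Fin (k - k') → F) : Fin k → F) = 0 := by
  funext j
  simp [concat]

theorem exists_concat_eq (hk : k' ≤ k) (x : Fin k → F) :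
    ∃ (m : Fin k' → F) (r : Fin (k - k') → F), concat m r = x := by
  refine ⟨fun i => x (i.castLE hk), fun i => x ⟨k' + i, by omega⟩, funext fun j => ?_⟩
  by_cases hj : (j : ℕ) < k'
  · simp [concat, hj]
  · simp [concat, hj, Nat.add_sub_cancel' (not_lt.mp hj)]

theorem forall_concat_eq_zero_iff [Zero F] (hk : k' ≤ k) (m : Fin k' → F)
    (r : Fin (k - k') → F) :
    (∀ j : Fin k, (j : ℕ) < k' → concat m r j = 0) ↔ m = 0 := by
  constructor
  · intro h
    funext i
    simpa [concat] using h (i.castLE hk) i.isLt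
  · rintro rfl j hj
    simp [concat, hj]

end Concat

section Code

variable {F : Type*} [Field F] {n k k' : ℕ}

theorem dualCode_eq_orthogonal (W : Submodule F (Fin n → F)) :
    dualCode W = LinearMap.BilinForm.orthogonal (dotProductBilin F F) W := by
  ext u
  refine forall₂_congr fun w _ => ?_
  change u ⬝ᵥ w = 0 ↔ w ⬝ᵥ u = 0
  rw [dotProduct_comm]

theorem dualCode_dualCode (W : Submodule F (Fin n → F)) : dualCode (dualCode W) = W := by
  have hsymm : (dotProductBilin F F : LinearMap.BilinForm F (Fin n → F)).IsSymm :=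
    ⟨fun u v => dotProduct_comm u v⟩
  have hnondeg : (dotProductBilin F F : LinearMap.BilinForm F (Fin n → F)).Nondegenerate :=
    hsymm.isRefl.nondegenerate_iff_separatingLeft.mpr dotProduct_eq_zero
  simp only [dualCode_eq_orthogonal]
  exact LinearMap.BilinForm.orthogonal_orthogonal hnondeg hsymm.isRefl W

theorem lastColSpan_eq_map (G : Matrix (Fin n) (Fin k) F) (k' : ℕ) :
    lastColSpan G k' =
      (Submodule.span F (Pi.basisFun F (Fin k) '' {j | k' ≤ (j : ℕ)})).map G.mulVecLin := by
  have hcol (j : Fin k) : (fun i => G i j) = G.col j := rfl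
  rw [Submodule.map_span, Set.image_image, lastColSpan]
  congr 1
  ext v
  simp [hcol, eq_comm]

theorem mulVec_mem_lastColSpan_iff {G : Matrix (Fin n) (Fin k) F}
    (hG : Function.Injective G.mulVecLin) (x : Fin k → F) :
    G.mulVec x ∈ lastColSpan G k' ↔ ∀ j : Fin k, (j : ℕ) < k' → x j = 0 := by
  rw [lastColSpan_eq_map, ← Matrix.mulVecLin_apply, ← SetLike.mem_coe, Submodule.map_coe,
    hG.mem_set_image, SetLike.mem_coe, Module.Basis.mem_span_image]
  simp [Set.subset_def, not_imp_comm]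

theorem mulVec_concat_mem_lastColSpan_iff {G : Matrix (Fin n) (Fin k) F}
    (hG : Function.Injective G.mulVecLin) (hk : k' ≤ k)
    (m : Fin k' → F) (r : Fin (k - k') → F) :
    G.mulVec (concat m r) ∈ lastColSpan G k' ↔ m = 0 :=
  (mulVec_mem_lastColSpan_iff hG _).trans (forall_concat_eq_zero_iff hk m r)

variable [DecidableEq F]

theorem decodableFromErrors_iff_exists_forall_hammingDist_le
    (G : Matrix (Fin n) (Fin k) F) (k' e : ℕ) :
    DecodableFromErrors G k' e ↔
      ∃ D : (Fin n → F) → (Fin k' → F),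
        ∀ (m : Fin k' → F) (r : Fin (k - k') → F) (z : Fin n → F),
          hammingDist (G.mulVec (concat m r)) z ≤ e → D z = m := by
  refine exists_congr fun D => forall₂_congr fun m r =>
    (Equiv.addLeft (G.mulVec (concat m r))).forall_congr fun y => ?_
  simp [hammingDist_eq_hammingNorm]

theorem decodableFromErrors_iff_forall_lt_hammingNorm
    (G : Matrix (Fin n) (Fin k) F) (k' e : ℕ) :
    DecodableFromErrors G k' e ↔
      ∀ (m : Fin k' → F) (r : Fin (k - k') → F), m ≠ 0 →
        2 * e < hammingNorm (G.mulVec (concat m r)) := by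
  rw [decodableFromErrors_iff_exists_forall_hammingDist_le,
    exists_decoder_iff_forall_lt_hammingDist]
  constructor
  · intro h m r hm
    simpa [concat_zero_zero] using h m r 0 0 hm
  · intro h m r m' r' hne
    have hlt := h (m' - m) (r' - r) (sub_ne_zero.mpr hne.symm)
    rwa [← concat_sub_concat, Matrix.mulVec_sub, sub_eq_neg_add,
      ← hammingDist_eq_hammingNorm] at hlt

theorem decodableFromErrors_iff_forall_mem_range {G : Matrix (Fin n) (Fin k) F}
    (hG : Function.Injective G.mulVecLin) (hk : k' ≤ k) (e : ℕ) :
    DecodableFromErrors G k' e ↔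
      ∀ c ∈ LinearMap.range G.mulVecLin, c ∉ lastColSpan G k' → 2 * e < hammingNorm c := by
  rw [decodableFromErrors_iff_forall_lt_hammingNorm]
  constructor
  · rintro h _ ⟨x, rfl⟩ hx
    obtain ⟨m, r, rfl⟩ := exists_concat_eq hk x
    exact h m r fun hm => hx ((mulVec_concat_mem_lastColSpan_iff hG hk m r).mpr hm)
  · intro h m r hm
    exact h _ ⟨_, rfl⟩ fun hmem => hm ((mulVec_concat_mem_lastColSpan_iff hG hk m r).mp hmem)

end Code

theorem dX_iff_decodable_general {F : Type*} [Field F] [DecidableEq F] {n k k' : ℕ}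
    {G : Matrix (Fin n) (Fin k) F} (hG : Function.Injective G.mulVecLin) (hk : k' ≤ k) {dX : ℕ}
    (hdX : IsLeast {w | ∃ c, c ∈ LinearMap.range G.mulVecLin ∧
      c ∉ dualCode (dualCode (lastColSpan G k')) ∧ hammingNorm c = w} dX) (e : ℕ) :
    2 * e < dX ↔ DecodableFromErrors G k' e := by
  rw [dualCode_dualCode] at hdX
  rw [decodableFromErrors_iff_forall_mem_range hG hk]
  constructor
  · intro he c hc hcL
    exact he.trans_le (hdX.2 ⟨c, hc, hcL, rfl⟩)
  · intro h
    obtain ⟨c, hc, hcL, rfl⟩ := hdX.1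
    exact h c hc hcL

/-- With `C_X = C`, `C_Z` the orthogonal complement of the span of the last
`k - k'` columns of the generator matrix `G`, and `d_X` the minimum Hamming weight of a vector
in `C_X \ C_Z^⊥`: for every `e ∈ ℕ`, `d_X > 2e` iff the `k'`-randomized encoding map for `G`
is decodable from `e` errors. -/
theorem dX_iff_decodable
    {F : Type*} [Field F] [Fintype F] [DecidableEq F] {n k k' : ℕ}
    (C : Submodule F (Fin n → F)) (G : Matrix (Fin n) (Fin k) F)
    (hGfullrank : Function.Injective G.mulVecLin)
    (hGspan : LinearMap.range G.mulVecLin = C)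
    (hdim : Module.finrank F C = k)
    (hk' : k' < k)
    (CX CZ : Submodule F (Fin n → F))
    (hCX : CX = C)
    (hCZ : CZ = dualCode (lastColSpan G k'))
    (dX : ℕ)
    (hdX : IsLeast {w | ∃ c, c ∈ CX ∧ c ∉ dualCode CZ ∧ hammingNorm c = w} dX) :
    ∀ e : ℕ, 2 * e < dX ↔ DecodableFromErrors G k' e := by
  subst hGspan hCX hCZ
  exact dX_iff_decodable_general hGfullrank hk'.le hdX
end

section
/- Let F be a finite field, let C ⊆ F^n be a linear code of dimension k with generator matrix G ∈ F^{n×k}, let k' < k and t < n, and let Enc be the k'-randomized encoding map for G. Then Enc is t-ZK if and only if for every vector u ∈ F^n with wt(u) ≤ t, the vector w = uᵀ·G ∈ F^k does not satisfy both w ≠ 0 and w_j = 0 for all j ∈ [k] \ [k'] (i.e., no linear combination of at most t rows of G yields a nonzero vector whose last k−k' coordinates all vanish). -/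
/-!
Split `G` into its message columns `M` and its randomness columns `R`, so that
`Enc(m) = M m + R r`. On a set `I` of rows, the set of `r` with `(M m + R r)|_I = v` is a fibre of
a translate of `R|_I`; the number of such `r` is independent of `m`, for every `v`, exactly when
every column of `M|_I` lies in the column span of `R|_I`. By duality this inclusion of column spans
says that every vector supported on `I` which annihilates `R` also annihilates `M`, and the vectors
supported on some `t`-element set `I` are those of weight at most `t`.
-/

open Matrix

section Fibers

variable {A B V : Type*} [AddGroup A] [AddGroup B] [AddGroup V]

theorem natCard_add_fiber_eq_of_range_le {f : A →+ V} {g : B →+ V} (h : f.range ≤ g.range)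
    (a a' : A) (v : V) :
    Nat.card {b // f a + g b = v} = Nat.card {b // f a' + g b = v} := by
  obtain ⟨s, hs⟩ := h ⟨-a' + a, rfl⟩
  have shift (b : B) : f a' + g (s + b) = f a + g b := by
    rw [map_add, hs, map_add, map_neg, add_assoc, add_neg_cancel_left]
  exact Nat.card_congr ((Equiv.addLeft s).subtypeEquiv fun b => by
    rw [Equiv.coe_addLeft, shift])

theorem range_le_of_natCard_add_fiber_zero_eq [Finite B] {f : A →+ V} {g : B →+ V}
    (h : ∀ a, Nat.card {b // f a + g b = 0} = Nat.card {b // g b = 0}) :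
    f.range ≤ g.range := by
  rintro _ ⟨a, rfl⟩
  have : Nonempty {b // g b = 0} := ⟨0, map_zero g⟩
  have hpos : 0 < Nat.card {b // f a + g b = 0} := by
    rw [h a]
    exact Nat.card_pos
  obtain ⟨⟨b, hb⟩⟩ := (Nat.card_pos_iff.mp hpos).1
  exact ⟨-b, by rw [map_neg, ← eq_neg_of_add_eq_zero_left hb]⟩

theorem natCard_add_fiber_eq_iff_range_le [Finite B] {f : A →+ V} {g : B →+ V} :
    (∀ a a' v, Nat.card {b // f a + g b = v} = Nat.card {b // f a' + g b = v}) ↔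
      f.range ≤ g.range :=
  ⟨fun h => range_le_of_natCard_add_fiber_zero_eq fun a => by simpa using h a 0 0,
    natCard_add_fiber_eq_of_range_le⟩

end Fibers

section ColumnSpaces

theorem range_le_range_iff_ker_dualMap_le_ker_dualMap {K U V W : Type*} [Field K]
    [AddCommGroup U] [Module K U] [AddCommGroup V] [Module K V] [AddCommGroup W] [Module K W]
    {f : U →ₗ[K] W} {g : V →ₗ[K] W} :
    f.range ≤ g.range ↔ g.dualMap.ker ≤ f.dualMap.ker := by
  rw [LinearMap.ker_dualMap_eq_dualAnnihilator_range,
    LinearMap.ker_dualMap_eq_dualAnnihilator_range,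
    Subspace.dualAnnihilator_le_dualAnnihilator_iff]

variable {F ι τ κ ρ : Type*} [Fintype ι]

theorem dotProductEquiv_mem_ker_dualMap_mulVecLin [CommSemiring F] [DecidableEq ι] [Fintype κ]
    (M : Matrix ι κ F) (y : ι → F) :
    dotProductEquiv F ι y ∈ M.mulVecLin.dualMap.ker ↔ y ᵥ* M = 0 := by
  rw [← dotProduct_eq_zero_iff]
  simp [LinearMap.ext_iff, dotProduct_mulVec]

theorem range_mulVecLin_le_iff [Field F] [Fintype κ] [Fintype ρ]
    {M : Matrix ι κ F} {R : Matrix ι ρ F} :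
    M.mulVecLin.range ≤ R.mulVecLin.range ↔ ∀ y, y ᵥ* R = 0 → y ᵥ* M = 0 := by
  classical
  simp_rw [range_le_range_iff_ker_dualMap_le_ker_dualMap, SetLike.le_def,
    (dotProductEquiv F ι).surjective.forall, dotProductEquiv_mem_ker_dualMap_mulVecLin]

theorem comp_vecMul_submatrix_of_injective [NonUnitalNonAssocSemiring F] [Fintype τ]
    {e : τ → ι} (he : e.Injective) {u : ι → F} (hu : ∀ i ∉ Set.range e, u i = 0)
    (M : Matrix ι κ F) : (u ∘ e) ᵥ* M.submatrix e id = u ᵥ* M := by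
  ext j
  exact Fintype.sum_of_injective e he _ _ (fun i hi => by rw [hu i hi, zero_mul]) fun _ => rfl

theorem range_mulVecLin_submatrix_le_iff [Field F] [Fintype κ] [Fintype ρ] [Finite τ]
    {M : Matrix ι κ F} {R : Matrix ι ρ F} {e : τ → ι} (he : e.Injective) :
    (M.submatrix e id).mulVecLin.range ≤ (R.submatrix e id).mulVecLin.range ↔
      ∀ u : ι → F, (∀ i ∉ Set.range e, u i = 0) → u ᵥ* R = 0 → u ᵥ* M = 0 := by
  cases nonempty_fintype τ
  rw [range_mulVecLin_le_iff]
  constructor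
  · intro h u hu
    simpa only [comp_vecMul_submatrix_of_injective he hu] using h (u ∘ e)
  · intro h y
    have hy : ∀ i ∉ Set.range e, Function.extend e y 0 i = 0 :=
      fun i hi => Function.extend_apply' _ _ i hi
    simpa only [← comp_vecMul_submatrix_of_injective he hy, Function.extend_comp he] using h _ hy

end ColumnSpaces

theorem hammingNorm_le_iff_exists_card_eq {ι F : Type*} [Fintype ι] [Zero F] [DecidableEq F]
    {t : ℕ} (ht : t ≤ Fintype.card ι) {u : ι → F} :
    hammingNorm u ≤ t ↔ ∃ I : Finset ι, I.card = t ∧ ∀ i ∉ I, u i = 0 := by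
  constructor
  · intro hu
    obtain ⟨I, hsupp, hI⟩ := Finset.exists_superset_card_eq hu ht
    exact ⟨I, hI, fun i hi => by_contra fun hne => hi (hsupp (by simpa using hne))⟩
  · rintro ⟨I, rfl, hI⟩
    exact Finset.card_le_card fun i hi => by_contra fun hiI => by simp [hI i hiI] at hi

section Columns

variable {F : Type*} {n k k' : ℕ}

/-- The block `M` of the first `k'` columns of `G`, which multiply the message. -/
def messageCols (G : Matrix (Fin n) (Fin k) F) (hk' : k' ≤ k) : Matrix (Fin n) (Fin k') F :=
  G.submatrix id fun j => (j.castAdd (k - k')).cast (Nat.add_sub_of_le hk')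

/-- The block `R` of the last `k - k'` columns of `G`, which multiply the randomness. -/
def randomnessCols (G : Matrix (Fin n) (Fin k) F) (hk' : k' ≤ k) :
    Matrix (Fin n) (Fin (k - k')) F :=
  G.submatrix id fun j => (j.natAdd k').cast (Nat.add_sub_of_le hk')

theorem mulVec_concat [NonUnitalNonAssocSemiring F] (G : Matrix (Fin n) (Fin k) F) (hk' : k' ≤ k)
    (m : Fin k' → F) (r : Fin (k - k') → F) :
    G *ᵥ concat m r = messageCols G hk' *ᵥ m + randomnessCols G hk' *ᵥ r := by
  ext i
  simp only [mulVec, dotProduct, Pi.add_apply]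
  rw [← (finCongr (Nat.add_sub_of_le hk')).sum_comp, Fin.sum_univ_add]
  simp [concat, messageCols, randomnessCols]

theorem vecMul_messageCols_eq_zero_iff [NonUnitalNonAssocSemiring F]
    (G : Matrix (Fin n) (Fin k) F) (hk' : k' ≤ k) (u : Fin n → F) :
    u ᵥ* messageCols G hk' = 0 ↔ ∀ j : Fin k, (j : ℕ) < k' → (u ᵥ* G) j = 0 :=
  ⟨fun h j hj => congrFun h ⟨j, hj⟩, fun h => funext fun j => h (j.castLE hk') j.isLt⟩

theorem vecMul_randomnessCols_eq_zero_iff [NonUnitalNonAssocSemiring F]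
    (G : Matrix (Fin n) (Fin k) F) (hk' : k' ≤ k) (u : Fin n → F) :
    u ᵥ* randomnessCols G hk' = 0 ↔ ∀ j : Fin k, k' ≤ (j : ℕ) → (u ᵥ* G) j = 0 := by
  constructor
  · intro h j hj
    obtain ⟨i, rfl⟩ : ∃ i : Fin (k - k'), (i.natAdd k').cast (Nat.add_sub_of_le hk') = j :=
      ⟨⟨j - k', by lia⟩, Fin.ext (Nat.add_sub_of_le hj)⟩
    exact congrFun h i
  · exact fun h => funext fun i => h _ (Nat.le_add_right k' i)

theorem vecMul_eq_zero_iff_messageCols_and_randomnessCols [NonUnitalNonAssocSemiring F]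
    (G : Matrix (Fin n) (Fin k) F) (hk' : k' ≤ k) (u : Fin n → F) :
    u ᵥ* G = 0 ↔ u ᵥ* messageCols G hk' = 0 ∧ u ᵥ* randomnessCols G hk' = 0 := by
  rw [vecMul_messageCols_eq_zero_iff, vecMul_randomnessCols_eq_zero_iff, ← forall_and, funext_iff]
  exact forall_congr' fun j =>
    ⟨fun h => ⟨fun _ => h, fun _ => h⟩, fun h => (lt_or_ge (j : ℕ) k').elim h.1 h.2⟩

end Columns

theorem isZK_iff_range_le {F : Type*} [Field F] [Finite F] {n k k' t : ℕ}
    (G : Matrix (Fin n) (Fin k) F) (hk' : k' ≤ k) :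
    IsZK G k' t ↔ ∀ I : Finset (Fin n), I.card = t →
      ((messageCols G hk').submatrix ((↑) : I → Fin n) id).mulVecLin.range ≤
        ((randomnessCols G hk').submatrix ((↑) : I → Fin n) id).mulVecLin.range := by
  refine forall₂_congr fun I _ => ?_
  simp_rw [← Submodule.toAddSubgroup_le, LinearMap.range_toAddSubgroup,
    ← natCard_add_fiber_eq_iff_range_le, mulVec_concat G hk', funext_iff]
  -- `(M.submatrix (↑) id *ᵥ m) i` and `(M *ᵥ m) ↑i` are the same by definition.
  rfl

theorem zk_iff_no_bad_combination_general {F : Type*} [Field F] [Finite F] [DecidableEq F]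
    {n k k' t : ℕ} (G : Matrix (Fin n) (Fin k) F) (hk' : k' ≤ k) (ht : t ≤ n) :
    IsZK G k' t ↔
      ∀ u : Fin n → F, hammingNorm u ≤ t →
        ¬(u ᵥ* G ≠ 0 ∧ ∀ j : Fin k, k' ≤ (j : ℕ) → (u ᵥ* G) j = 0) := by
  set M := messageCols G hk'
  set R := randomnessCols G hk'
  calc
    IsZK G k' t ↔ ∀ I : Finset (Fin n), I.card = t →
        (M.submatrix ((↑) : I → Fin n) id).mulVecLin.range ≤
          (R.submatrix ((↑) : I → Fin n) id).mulVecLin.range := isZK_iff_range_le G hk'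
    _ ↔ ∀ I : Finset (Fin n), I.card = t →
        ∀ u : Fin n → F, (∀ i ∉ I, u i = 0) → u ᵥ* R = 0 → u ᵥ* M = 0 := by
      simp [range_mulVecLin_submatrix_le_iff Subtype.val_injective]
    _ ↔ ∀ u : Fin n → F, hammingNorm u ≤ t → u ᵥ* R = 0 → u ᵥ* M = 0 := by
      simp only [hammingNorm_le_iff_exists_card_eq (ht.trans_eq (Fintype.card_fin n).symm)]
      grind
    _ ↔ _ := forall₂_congr fun u _ => by
      rw [Ne, vecMul_eq_zero_iff_messageCols_and_randomnessCols G hk',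
        ← vecMul_randomnessCols_eq_zero_iff G hk']
      tauto

/-- (Lemma: equivalent formulation of ZK.) The `k'`-randomized encoding map
for `G` is `t`-ZK iff no linear combination of at most `t` rows of `G` (i.e. `w = uᵀ·G` with
`wt(u) ≤ t`) yields a nonzero vector `w ∈ F^k` whose last `k - k'` coordinates all vanish. -/
theorem zk_iff_no_bad_combination
    {F : Type*} [Field F] [Fintype F] [DecidableEq F] {n k k' t : ℕ}
    (C : Submodule F (Fin n → F)) (G : Matrix (Fin n) (Fin k) F)
    (hGfullrank : Function.Injective G.mulVecLin)
    (hGspan : LinearMap.range G.mulVecLin = C)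
    (hdim : Module.finrank F C = k)
    (hk' : k' < k) (ht : t < n) :
    IsZK G k' t ↔
      ∀ u : Fin n → F, hammingNorm u ≤ t →
        ¬(Matrix.vecMul u G ≠ 0 ∧ ∀ j : Fin k, k' ≤ (j : ℕ) → Matrix.vecMul u G j = 0) :=
  zk_iff_no_bad_combination_general G hk'.le ht.le
end

section
/- Let F be a finite field, let G ∈ F^{n×k} be a matrix, let k' < k, let Enc be the k'-randomized encoding map for G, and fix a subset I ⊆ [n]. Then the following are equivalent: (i) for every pair of messages m, m' ∈ F^{k'}, the random variables Enc(m)|_I and Enc(m')|_I are identically distributed (i.e., for every v ∈ F^I, the number of r ∈ F^{k−k'} with (G·(m,r))|_I = v equals the number of r with (G·(m',r))|_I = v); (ii) for every m ∈ F^{k'} there exists r ∈ F^{k−k'} such that (G·(m,r))|_I = 0. -/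
/-!
Regard the encoding as an additive map of the pair `(m, r)`. If `s` encodes `m' - m` to zero on
`I`, then the translation `r ↦ r + s` is a bijection from the randomness encoding `m` to `v` onto
the randomness encoding `m'` to `v`. Conversely, `r = 0` encodes the zero message to zero, so if all
messages have the same distribution then every message is encoded to zero by some `r`.
-/

section ProductHom

variable {M R C : Type*}

theorem natCard_fiber_eq_of_map_neg_add_eq_zero [AddGroup M] [AddGroup R] [AddZeroClass C]
    (f : M × R →+ C) {m m' : M} {s : R} (hs : f (-m + m', s) = 0) (v : C) :
    Nat.card {r // f (m, r) = v} = Nat.card {r // f (m', r) = v} := by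
  have map_translate (r : R) : f (m', r + s) = f (m, r) := by
    calc f (m', r + s) = f ((m, r) + (-m + m', s)) := by rw [Prod.mk_add_mk, add_neg_cancel_left]
      _ = f (m, r) := by rw [map_add, hs, add_zero]
  refine Nat.card_congr ((Equiv.addRight s).subtypeEquiv fun r ↦ ?_)
  rw [Equiv.coe_addRight, map_translate]

theorem exists_map_eq_zero_of_natCard_fiber_eq [AddZeroClass M] [AddZeroClass R]
    [AddZeroClass C] (f : M × R →+ C) [Finite {r // f (0, r) = 0}] {m : M}
    (hm : Nat.card {r // f (m, r) = 0} = Nat.card {r // f (0, r) = 0}) :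
    ∃ r, f (m, r) = 0 := by
  have : Nonempty {r // f (0, r) = 0} := ⟨0, map_zero f⟩
  have card_pos : 0 < Nat.card {r // f (m, r) = 0} := hm ▸ Nat.card_pos
  exact nonempty_subtype.mp (Nat.card_pos_iff.mp card_pos).1

theorem identical_iff_zero_in_support_general [AddGroup M] [AddGroup R] [AddZeroClass C]
    (f : M × R →+ C) [Finite {r // f (0, r) = 0}] :
    (∀ m m' v, Nat.card {r // f (m, r) = v} = Nat.card {r // f (m', r) = v}) ↔
      ∀ m, ∃ r, f (m, r) = 0 := by
  refine ⟨fun h m ↦ exists_map_eq_zero_of_natCard_fiber_eq f (h m 0 0), fun h m m' v ↦ ?_⟩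
  obtain ⟨s, hs⟩ := h (-m + m')
  exact natCard_fiber_eq_of_map_neg_add_eq_zero f hs v

end ProductHom

section RandomizedEncoding

variable {S : Type*} {k k' : ℕ}

theorem concat_zero [Zero S] :
    concat (0 : Fin k' → S) (0 : Fin (k - k') → S) = 0 := by
  funext j
  simp [concat]

theorem concat_add [Add S] (m m' : Fin k' → S) (r r' : Fin (k - k') → S) :
    concat (m + m') (r + r') = concat m r + concat m' r' := by
  funext j
  by_cases hj : (j : ℕ) < k' <;> simp [concat, hj]

/-- The `k'`-randomized encoding `(m, r) ↦ A · (m, r)`, as an additive map jointly in the message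
and the randomness. The rows of `A` are indexed by an arbitrary type so that `Enc(m)|_I` is the
encoding by the row-submatrix `A|_I`. -/
def randomizedEncoding [NonUnitalNonAssocSemiring S] {ι : Type*} (A : Matrix ι (Fin k) S)
    (k' : ℕ) : (Fin k' → S) × (Fin (k - k') → S) →+ (ι → S) where
  toFun x := A.mulVec (concat x.1 x.2)
  map_zero' := by rw [Prod.fst_zero, Prod.snd_zero, concat_zero, Matrix.mulVec_zero]
  map_add' x y := by rw [Prod.fst_add, Prod.snd_add, concat_add, Matrix.mulVec_add]

theorem randomizedEncoding_submatrix_eq_iff [NonUnitalNonAssocSemiring S] {ι κ : Type*}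
    (A : Matrix ι (Fin k) S) (e : κ → ι) (m : Fin k' → S) (r : Fin (k - k') → S) (v : κ → S) :
    randomizedEncoding (A.submatrix e id) k' (m, r) = v ↔
      ∀ i, A.mulVec (concat m r) (e i) = v i :=
  funext_iff

end RandomizedEncoding

/-- (Claim 1.) For a fixed set `I` of coordinates, the restrictions
`Enc(m)|_I` and `Enc(m')|_I` are identically distributed for every pair of messages `m, m'`
iff for every message `m` the all-zeros pattern is in the support of `Enc(m)|_I`. -/
theorem identical_iff_zero_in_support
    {F : Type*} [Field F] [Fintype F] {n k k' : ℕ} (hk' : k' < k)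
    (G : Matrix (Fin n) (Fin k) F) (I : Finset (Fin n)) :
    (∀ m m' : Fin k' → F, ∀ v : {i // i ∈ I} → F,
        Nat.card {r : Fin (k - k') → F //
            ∀ i : {i // i ∈ I}, G.mulVec (concat m r) i.1 = v i} =
        Nat.card {r : Fin (k - k') → F //
            ∀ i : {i // i ∈ I}, G.mulVec (concat m' r) i.1 = v i}) ↔
    (∀ m : Fin k' → F, ∃ r : Fin (k - k') → F, ∀ i ∈ I, G.mulVec (concat m r) i = 0) := by
  simpa only [randomizedEncoding_submatrix_eq_iff, Pi.zero_apply, Subtype.forall] using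
    identical_iff_zero_in_support_general (randomizedEncoding (G.submatrix ((↑) : I → Fin n) id) k')
end

section
/- Let F be a finite field, let G ∈ F^{n×k} be a matrix, let k' < k, and let e ∈ ℕ. Then the following are equivalent: (i) there exists a deterministic function D : F^n → F^{k'} such that for every m ∈ F^{k'}, every r ∈ F^{k−k'}, and every y ∈ F^n with wt(y) ≤ e, D(G·(m,r) + y) = m; (ii) for every pair of distinct messages m ≠ m' ∈ F^{k'} and every (not necessarily distinct) r, r' ∈ F^{k−k'}, Δ(G·(m,r), G·(m',r')) > 2e. -/
/-! A decoder exists exactly when no word can be received from two different messages, that is, when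
the radius-`e` Hamming balls around encodings of different messages are disjoint. Two such balls
meet precisely when their centres are at distance at most `2 * e`: changing up to `e` coordinates
where the centres differ leads from one centre to a point within `e` of the other. -/

section Decoder

variable {M W : Type*}

theorem exists_decoder_iff_leftUnique [Nonempty M] (received : M → W → Prop) :
    (∃ D : W → M, ∀ m w, received m w → D w = m) ↔ Relator.LeftUnique received := by
  constructor
  · rintro ⟨D, hD⟩ m m' w hm hm'
    exact (hD m w hm).symm.trans (hD m' w hm')
  · intro hunique
    exact ⟨fun w => Classical.epsilon (received · w), fun m w hm =>
      hunique (Classical.epsilon_spec (p := (received · w)) ⟨m, hm⟩) hm⟩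

end Decoder

section HammingDist

variable {ι : Type*} [Fintype ι] {β : ι → Type*} [∀ i, DecidableEq (β i)]

theorem hammingDist_piecewise_right_le_card [DecidableEq ι] (s : Finset ι) (x y : ∀ i, β i) :
    hammingDist x (s.piecewise y x) ≤ s.card := by
  refine Finset.card_le_card fun i hi => ?_
  by_contra his
  simp [his] at hi

theorem hammingDist_piecewise_left_le_card_sdiff [DecidableEq ι] (s : Finset ι) (x y : ∀ i, β i) :
    hammingDist (s.piecewise y x) y ≤ (({i | x i ≠ y i} : Finset ι) \ s).card := by
  refine Finset.card_le_card fun i hi => ?_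
  by_cases his : i ∈ s <;> simp_all

theorem hammingDist_le_add_iff {x y : ∀ i, β i} {a b : ℕ} :
    hammingDist x y ≤ a + b ↔ ∃ z, hammingDist x z ≤ a ∧ hammingDist z y ≤ b := by
  classical
  constructor
  · intro hxy
    obtain ⟨s, hs, hcard⟩ := Finset.exists_subset_card_eq
      (min_le_right a (hammingDist x y) : _ ≤ ({i | x i ≠ y i} : Finset ι).card)
    refine ⟨s.piecewise y x, ?_, ?_⟩
    · calc
        hammingDist x (s.piecewise y x) ≤ s.card := hammingDist_piecewise_right_le_card s x y
        _ ≤ a := hcard.trans_le (min_le_left _ _)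
    · calc
        hammingDist (s.piecewise y x) y ≤ (({i | x i ≠ y i} : Finset ι) \ s).card :=
          hammingDist_piecewise_left_le_card_sdiff s x y
        _ = hammingDist x y - min a (hammingDist x y) := by
          rw [Finset.card_sdiff_of_subset hs, hcard, hammingDist]
        _ ≤ b := by omega
  · rintro ⟨z, hxz, hzy⟩
    exact (hammingDist_triangle x z y).trans (add_le_add hxz hzy)

theorem hammingDist_self_add_right {A : ι → Type*} [∀ i, AddLeftCancelMonoid (A i)]
    [∀ i, DecidableEq (A i)] (x y : ∀ i, A i) :
    hammingDist x (x + y) = hammingNorm y := by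
  simp [hammingDist, hammingNorm]

end HammingDist

section RandomizedEncoding

variable {M R ι : Type*} [Fintype ι] {β : ι → Type*} [∀ i, DecidableEq (β i)]

/-- The word `w` can be received when the message `m` is sent through the randomized encoding `enc`
(a function of the message and the randomness) over a channel making at most `e` errors. Errors are
measured by Hamming distance, so that the alphabets `β i` need not carry an addition. -/
def IsCorruptedEncoding (enc : M → R → ∀ i, β i) (e : ℕ) (m : M) (w : ∀ i, β i) : Prop :=
  ∃ r, hammingDist (enc m r) w ≤ e

theorem leftUnique_isCorruptedEncoding_iff (enc : M → R → ∀ i, β i) (e : ℕ) :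
    Relator.LeftUnique (IsCorruptedEncoding enc e) ↔
      ∀ m m', m ≠ m' → ∀ r r', 2 * e < hammingDist (enc m r) (enc m' r') := by
  constructor
  · intro hunique m m' hne r r'
    by_contra! hle
    obtain ⟨w, hw, hw'⟩ := hammingDist_le_add_iff.mp (two_mul e ▸ hle)
    exact hne (hunique ⟨r, hw⟩ ⟨r', hammingDist_comm w _ ▸ hw'⟩)
  · rintro hfar m m' w ⟨r, hw⟩ ⟨r', hw'⟩
    by_contra hne
    have hclose : hammingDist (enc m r) (enc m' r') ≤ e + e :=
      hammingDist_le_add_iff.mpr ⟨w, hw, hammingDist_comm w _ ▸ hw'⟩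
    exact (hfar m m' hne r r').not_ge (two_mul e ▸ hclose)

theorem forall_isCorruptedEncoding_iff {A : ι → Type*} [∀ i, AddGroup (A i)]
    [∀ i, DecidableEq (A i)] (enc : M → R → ∀ i, A i) (e : ℕ) (m : M) (p : (∀ i, A i) → Prop) :
    (∀ w, IsCorruptedEncoding enc e m w → p w) ↔
      ∀ r y, hammingNorm y ≤ e → p (enc m r + y) := by
  constructor
  · intro hp r y hy
    exact hp _ ⟨r, (hammingDist_self_add_right (enc m r) y).trans_le hy⟩
  · rintro hp w ⟨r, hw⟩
    have hnorm : hammingNorm (-enc m r + w) ≤ e := by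
      rwa [← hammingDist_self_add_right (enc m r), add_neg_cancel_left]
    simpa only [add_neg_cancel_left] using hp r _ hnorm

theorem decodable_iff_distance_general {A : ι → Type*} [∀ i, AddGroup (A i)]
    [∀ i, DecidableEq (A i)] [Nonempty M] (enc : M → R → ∀ i, A i) (e : ℕ) :
    (∃ D : (∀ i, A i) → M, ∀ m r y, hammingNorm y ≤ e → D (enc m r + y) = m) ↔
      ∀ m m', m ≠ m' → ∀ r r', 2 * e < hammingDist (enc m r) (enc m' r') := by
  calc
    (∃ D : (∀ i, A i) → M, ∀ m r y, hammingNorm y ≤ e → D (enc m r + y) = m)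
      ↔ ∃ D : (∀ i, A i) → M, ∀ m w, IsCorruptedEncoding enc e m w → D w = m :=
        exists_congr fun D => forall_congr' fun m =>
          (forall_isCorruptedEncoding_iff enc e m (D · = m)).symm
    _ ↔ Relator.LeftUnique (IsCorruptedEncoding enc e) := exists_decoder_iff_leftUnique _
    _ ↔ ∀ m m', m ≠ m' → ∀ r r', 2 * e < hammingDist (enc m r) (enc m' r') :=
        leftUnique_isCorruptedEncoding_iff enc e

end RandomizedEncoding

/-- The `k'`-randomized encoding map for `G` is decodable from `e` errors iff
encodings of distinct messages are at Hamming distance greater than `2e`. -/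
theorem decodable_iff_distance
    {F : Type*} [Field F] [Fintype F] [DecidableEq F] {n k k' : ℕ} (hk' : k' < k)
    (G : Matrix (Fin n) (Fin k) F) (e : ℕ) :
    (∃ D : (Fin n → F) → (Fin k' → F),
        ∀ (m : Fin k' → F) (r : Fin (k - k') → F) (y : Fin n → F),
          hammingNorm y ≤ e → D (G.mulVec (concat m r) + y) = m) ↔
    (∀ m m' : Fin k' → F, m ≠ m' → ∀ r r' : Fin (k - k') → F,
        2 * e < hammingDist (G.mulVec (concat m r)) (G.mulVec (concat m' r'))) :=
  decodable_iff_distance_general (fun m r => G.mulVec (concat m r)) e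
end
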